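/- In the ordered field of the reals (ℝ, +, ·, <, 0, 1), let F : ℝ² → ℝ be F(x,y) = min(y/x, 1) if x > 0 and y > 0, and F(x,y) = 0 otherwise, and let γ̄ : [0,1) → ℝ² be the curve γ̄(0) = (0,0), γ̄(t) = (t, −t/ln t) for t ∈ (0,1). Then there is no closed semialgebraic set C ⊆ ℝ² containing γ̄([0,s)) for some s ∈ (0,1) such that the restriction of F to C is continuous. -/

import Mathlib

/-!
The proof rests on quantifier elimination for the real field in the following form: membership in
a semialgebraic set depends only on the signs of finitely many polynomials
(`SemialgQE.exists_signs_of_semialgebraic`).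

Elimination of one variable (`SemialgQE.exists_finite_signs`) follows Cohen and Hörmander. A finite
family of polynomials in one variable `y`, with coefficients in a ring `A`, is closed under
deletion of leading terms, differentiation and pseudo-remainders; the closure is finite because
these operations lower degrees. If two specializations `φ ψ : A →+* ℝ` give the same signs to all
leading coefficients of the closure, then the line can be cut, for `φ` and for `ψ`, into cells
which correspond in order and on which the family has the same constant signs
(`SemialgQE.Matching`). The polynomials are added by increasing degree
(`SemialgQE.Matching.insert`): on a cell that consists of a root of an earlier polynomial `h`, the
sign of `g` is that of its pseudo-remainder modulo `h`; on an open cell `g` is strictly monotone,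
and the signs it takes are determined by its signs at the ends of the cell.

For the curve, substitute `y = x u`. Each polynomial in `x` and `u` has, along `u = -1 / ln x` as
`x → 0⁺`, the sign of its term of lowest order, first in `x` and then in `u`, since `x` is
negligible against all powers of `u`. The same sign is found for `x → 0⁺` with `u > 0` fixed and
small (`SemialgQE.exists_common_sign`). Hence a semialgebraic set that contains the curve near the
origin contains the ray `y = u x` near the origin for some `u ∈ (0, 1)`. On this ray `F` is
constantly `u`, while `F (0, 0) = 0`, so `F` is not continuous on the set.
-/

open FirstOrder FirstOrder.Language Set Topology Filter

namespace OMinPaper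

/-- An `n`-ary function is `A`-definable if its graph is an `A`-definable set. -/
def DefFun (L : FirstOrder.Language) {M : Type*} [L.Structure M] (A : Set M) {n : ℕ}
    (f : (Fin n → M) → M) : Prop :=
  A.Definable L {p : Fin (n + 1) → M | f (Fin.init p) = p (Fin.last n)}

/-- A unary function is `A`-definable if its graph is an `A`-definable set. -/
def DefFun₁ (L : FirstOrder.Language) {M : Type*} [L.Structure M] (A : Set M)
    (f : M → M) : Prop :=
  A.Definable L {p : Fin 2 → M | f (p 0) = p 1}

/-- An `n`-ary partial function with domain `Ω` is `A`-definable if its graph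
(restricted to `Ω`) is an `A`-definable set. -/
def DefFunOn (L : FirstOrder.Language) {M : Type*} [L.Structure M] (A : Set M) {n : ℕ}
    (Ω : Set (Fin n → M)) (f : (Fin n → M) → M) : Prop :=
  A.Definable L {p : Fin (n + 1) → M | Fin.init p ∈ Ω ∧ f (Fin.init p) = p (Fin.last n)}

/-- A subset of a linear order is a point or an open interval (with endpoints
possibly `±∞`). -/
def IsIntervalOrPoint {M : Type*} [LinearOrder M] (s : Set M) : Prop :=
  (∃ a, s = {a}) ∨ (∃ a b, s = Set.Ioo a b) ∨ (∃ a, s = Set.Iio a) ∨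
    (∃ a, s = Set.Ioi a) ∨ s = Set.univ

/-- `M` is an o-minimal structure: the order is definable without parameters, it is a dense
linear order without endpoints, and every subset of `M` definable with parameters is a finite
union of points and open intervals. -/
def IsOMinimal (L : FirstOrder.Language) (M : Type*) [L.Structure M] [LinearOrder M] : Prop :=
  (∅ : Set M).Definable L {p : Fin 2 → M | p 0 < p 1} ∧
  DenselyOrdered M ∧ NoMinOrder M ∧ NoMaxOrder M ∧
  ∀ s : Set M, (Set.univ : Set M).Definable₁ L s →
    ∃ t : Finset (Set M), (∀ u ∈ t, IsIntervalOrPoint u) ∧ s = ⋃₀ ↑t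

/-- The definable closure of a parameter set `A`: elements whose singleton is `A`-definable. -/
def dcl (L : FirstOrder.Language) {M : Type*} [L.Structure M] (A : Set M) : Set M :=
  {b | A.Definable₁ L {b}}

/-- `c` is principal above `β` over `A`: `β ∈ dcl(A)`, `β < c`, and no point of `dcl(A)` lies
in the interval `(β, c)`. -/
def PrincipalAbove (L : FirstOrder.Language) {M : Type*} [L.Structure M] [LinearOrder M]
    (A : Set M) (c β : M) : Prop :=
  β ∈ dcl L A ∧ β < c ∧ ∀ d ∈ dcl L A, d ∉ Set.Ioo β c

/-- `c` is principal below `β` over `A`. -/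
def PrincipalBelow (L : FirstOrder.Language) {M : Type*} [L.Structure M] [LinearOrder M]
    (A : Set M) (c β : M) : Prop :=
  β ∈ dcl L A ∧ c < β ∧ ∀ d ∈ dcl L A, d ∉ Set.Ioo c β

/-- `c` realizes the principal type near `+∞` over `A`. -/
def NearPosInf (L : FirstOrder.Language) {M : Type*} [L.Structure M] [LinearOrder M]
    (A : Set M) (c : M) : Prop :=
  ∀ d ∈ dcl L A, d < c

/-- `c` realizes the principal type near `-∞` over `A`. -/
def NearNegInf (L : FirstOrder.Language) {M : Type*} [L.Structure M] [LinearOrder M]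
    (A : Set M) (c : M) : Prop :=
  ∀ d ∈ dcl L A, c < d

/-- `tp(c/A)` is principal. -/
def Principal (L : FirstOrder.Language) {M : Type*} [L.Structure M] [LinearOrder M]
    (A : Set M) (c : M) : Prop :=
  c ∉ dcl L A ∧ ((∃ β, PrincipalAbove L A c β) ∨ (∃ β, PrincipalBelow L A c β) ∨
    NearPosInf L A c ∨ NearNegInf L A c)

/-- Two (sets of realizations of) 1-types `P` and `Q` are interdefinable over `B`: there are
`B`-definable unary functions mapping every realization of one to a realization of the other. -/
def Interdef (L : FirstOrder.Language) {M : Type*} [L.Structure M] (B : Set M)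
    (P Q : Set M) : Prop :=
  (∃ f : M → M, DefFun₁ L B f ∧ ∀ x ∈ P, f x ∈ Q) ∧
  (∃ g : M → M, DefFun₁ L B g ∧ ∀ y ∈ Q, g y ∈ P)

/-- All principal types are interdefinable over `A`. -/
def AllPrincipalInterdefOver (L : FirstOrder.Language) {M : Type*} [L.Structure M]
    [LinearOrder M] (A : Set M) : Prop :=
  (∀ b : M, Interdef L (A ∪ {b}) {x | PrincipalAbove L (A ∪ {b}) x b}
      {x | NearPosInf L (A ∪ {b}) x}) ∧
  (∀ b c : M, Interdef L (A ∪ {b, c}) {x | PrincipalAbove L (A ∪ {b, c}) x b}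
      {x | PrincipalBelow L (A ∪ {b, c}) x c}) ∧
  Interdef L A {x | NearPosInf L A x} {x | NearNegInf L A x}

/-- All principal types are interdefinable in the theory of `M`. -/
def AllPrincipalInterdef (L : FirstOrder.Language) (M : Type*) [L.Structure M]
    [LinearOrder M] : Prop :=
  ∀ A : Set M, AllPrincipalInterdefOver L A

/-- `X` is cofinal at `a` in `N`: `X ∩ N` is cofinal in `{x ∈ N : x < a}`. -/
def CofinalAt {M : Type*} [LinearOrder M] (X N : Set M) (a : M) : Prop :=
  ∀ y ∈ N, y < a → ∃ x ∈ X ∩ N, x < a ∧ y ≤ x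

/-- `X` is coinitial at `a` in `N`: `X ∩ N` is coinitial in `{x ∈ N : x > a}`. -/
def CoinitialAt {M : Type*} [LinearOrder M] (X N : Set M) (a : M) : Prop :=
  ∀ y ∈ N, a < y → ∃ x ∈ X ∩ N, a < x ∧ x ≤ y

/-- `tp(a/B)` is in scale on `A`: some `B`-definable unary function maps `dcl(A)` to a set both
cofinal and coinitial at `a` in `dcl(B)`. -/
def InScale (L : FirstOrder.Language) {M : Type*} [L.Structure M] [LinearOrder M]
    (A B : Set M) (a : M) : Prop :=
  ∃ f : M → M, DefFun₁ L B f ∧ CofinalAt (f '' dcl L A) (dcl L B) a ∧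
    CoinitialAt (f '' dcl L A) (dcl L B) a

/-- `tp(a/B)` is near scale on `A`. -/
def NearScale (L : FirstOrder.Language) {M : Type*} [L.Structure M] [LinearOrder M]
    (A B : Set M) (a : M) : Prop :=
  ¬ InScale L A B a ∧ ∃ f : M → M, DefFun₁ L B f ∧
    (CofinalAt (f '' dcl L A) (dcl L B) a ∨ CoinitialAt (f '' dcl L A) (dcl L B) a)

/-- `tp(a/B)` is out of scale on `A`: no `B`-definable unary image of `dcl(A)` is cofinal or
coinitial at `a` in `dcl(B)`. -/
def OutOfScale (L : FirstOrder.Language) {M : Type*} [L.Structure M] [LinearOrder M]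
    (A B : Set M) (a : M) : Prop :=
  ∀ f : M → M, DefFun₁ L B f →
    ¬ CofinalAt (f '' dcl L A) (dcl L B) a ∧ ¬ CoinitialAt (f '' dcl L A) (dcl L B) a

/-- `a ≺_A b` (relative to the distinguished `∅`-definable element `z`). -/
def Prec (L : FirstOrder.Language) {M : Type*} [L.Structure M] [LinearOrder M]
    (z : M) (A : Set M) (a b : M) : Prop :=
  ∃ a' ∈ dcl L (A ∪ {a}), z < a' ∧ ∀ d ∈ dcl L (A ∪ {b}), d ∉ Set.Ioo z a'

/-- `a ∼_A b`. -/
def Sim (L : FirstOrder.Language) {M : Type*} [L.Structure M] [LinearOrder M]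
    (z : M) (A : Set M) (a b : M) : Prop :=
  ¬ Prec L z A a b ∧ ¬ Prec L z A b a

/-- `a ≾_A b`. -/
def PrecSim (L : FirstOrder.Language) {M : Type*} [L.Structure M] [LinearOrder M]
    (z : M) (A : Set M) (a b : M) : Prop :=
  Prec L z A a b ∨ Sim L z A a b

/-- The set of coordinates of `c̄` before index `i`, as a parameter set. -/
def below {M : Type*} {n : ℕ} (c : Fin n → M) (i : Fin n) : Set M :=
  c '' {k | k < i}

/-- The tuple `c̄` realizes a decreasing type over `A`: `c_i ≿_i c_j` for `i < j`. -/
def Decreasing (L : FirstOrder.Language) {M : Type*} [L.Structure M] [LinearOrder M]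
    (z : M) (A : Set M) {n : ℕ} (c : Fin n → M) : Prop :=
  ∀ i j : Fin n, i < j → PrecSim L z (A ∪ below c i) (c j) (c i)

/-- A curve `γ̄` (defined for `t` with `z < t < u`) is non-oscillatory: each definable function
`f` of `(t, γ̄(t))` either is eventually equal to, or eventually different from, any fixed value
`z₀`, as `t → z⁺`. -/
def NonOscillatory (L : FirstOrder.Language) {M : Type*} [L.Structure M] [LinearOrder M]
    (z : M) {n : ℕ} (γ : M → Fin n → M) : Prop :=
  ∀ f : (Fin (n + 1) → M) → M, DefFun L (Set.univ : Set M) f → ∀ z₀ : M,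
    ∃ s, z < s ∧ ((∀ t ∈ Set.Ioo z s, f (Fin.cons t (γ t)) = z₀) ∨
      (∀ t ∈ Set.Ioo z s, f (Fin.cons t (γ t)) ≠ z₀))

end OMinPaper

noncomputable local instance : FirstOrder.Ring.CompatibleRing ℝ :=
  FirstOrder.Ring.compatibleRingOfRing ℝ

/-- A set is semialgebraic iff it is definable with parameters in the ordered field of the
reals; since the order is `∅`-definable from the ring operations over `ℝ`, this is the same
as definability with parameters in the language of rings. -/
def OMinPaper.Semialgebraic {k : ℕ} (s : Set (Fin k → ℝ)) : Prop :=
  (Set.univ : Set ℝ).Definable FirstOrder.Language.ring s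

/-- The function `F(x,y) = min(y/x, 1)` on the open first quadrant and `0` elsewhere. -/
noncomputable def OMinPaper.Fex (v : Fin 2 → ℝ) : ℝ :=
  if 0 < v 0 ∧ 0 < v 1 then min (v 1 / v 0) 1 else 0

/-- The curve `γ̄(t) = (t, −t/ln t)` (with `γ̄(0) = (0,0)`, which this formula also yields
by the `Mathlib` conventions `Real.log 0 = 0` and `0 / 0 = 0`). -/
noncomputable def OMinPaper.curveEx (t : ℝ) : Fin 2 → ℝ :=
  ![t, -t / Real.log t]

namespace SemialgQE
open Polynomial

/-! ### Pseudo-remainders -/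

theorem exists_pseudoRem {A : Type*} [CommRing A] (h : A[X]) (hh : 0 < h.natDegree) (n : ℕ) :
    ∀ g : A[X], g.natDegree ≤ n → ∃ (N : ℕ) (q r : A[X]),
      C (h.leadingCoeff ^ (2 * N)) * g = q * h + r ∧ r.natDegree < h.natDegree := by
  induction n with
  | zero => exact fun g hg => ⟨0, 0, g, by simp, by omega⟩
  | succ n ih =>
    intro g hg
    by_cases hlt : g.natDegree < h.natDegree
    · exact ⟨0, 0, g, by simp, hlt⟩
    set m := g.natDegree - h.natDegree with hm
    have hgm : g.natDegree = h.natDegree + m := by omega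
    obtain ⟨N, q, r, hqr, hr⟩ := ih
      (C (h.leadingCoeff ^ 2) * g - C (h.leadingCoeff * g.leadingCoeff) * (h * X ^ m)) (by
        rw [natDegree_le_iff_coeff_eq_zero]
        intro K hK
        rcases lt_or_ge g.natDegree K with h1 | h1
        · obtain ⟨K', rfl⟩ : ∃ K', K = K' + m := ⟨K - m, by omega⟩
          rw [coeff_sub, coeff_C_mul, coeff_C_mul, coeff_mul_X_pow,
            coeff_eq_zero_of_natDegree_lt h1,
            coeff_eq_zero_of_natDegree_lt (p := h) (n := K') (by omega)]
          simp
        · obtain rfl : K = h.natDegree + m := by omega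
          rw [coeff_sub, coeff_C_mul, coeff_C_mul, coeff_mul_X_pow, ← hgm]
          simp only [coeff_natDegree]
          ring)
    refine ⟨N + 1, q + C (h.leadingCoeff ^ (2 * N)) *
      (C (h.leadingCoeff * g.leadingCoeff) * X ^ m), r, ?_, hr⟩
    have e : C (h.leadingCoeff ^ (2 * (N + 1))) * g =
        C (h.leadingCoeff ^ (2 * N)) * (C (h.leadingCoeff ^ 2) * g) := by
      simp only [C_pow]; ring
    rw [e]
    linear_combination hqr

/-- A pseudo-remainder of `g` modulo a nonconstant `h`: a polynomial `r` of smaller degree than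
`h` such that an even power of the leading coefficient of `h` times `g` is congruent to `r`
modulo `h`. The junk value for constant `h` is `0`. -/
noncomputable def pseudoRem {A : Type*} [CommRing A] (g h : A[X]) : A[X] :=
  if hh : 0 < h.natDegree then
    (exists_pseudoRem h hh g.natDegree g le_rfl).choose_spec.choose_spec.choose
  else 0

theorem pseudoRem_spec {A : Type*} [CommRing A] (g h : A[X]) (hh : 0 < h.natDegree) :
    (∃ (N : ℕ) (q : A[X]), C (h.leadingCoeff ^ (2 * N)) * g = q * h + pseudoRem g h) ∧
      (pseudoRem g h).natDegree < h.natDegree := by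
  have key := (exists_pseudoRem h hh g.natDegree g le_rfl).choose_spec.choose_spec.choose_spec
  rw [pseudoRem, dif_pos hh]
  exact ⟨⟨_, _, key.1⟩, key.2⟩

/-- Specialization of the coefficients of `g` along `φ`, followed by evaluation at `y`. -/
noncomputable def ev {A : Type*} [CommRing A] (φ : A →+* ℝ) (g : A[X]) (y : ℝ) : ℝ :=
  (g.map φ).eval y

/-- At a root of `h`, the sign of `g` is the sign of its pseudo-remainder modulo `h`, because the
power of the leading coefficient is even. -/
theorem sign_ev_of_root {A : Type*} [CommRing A] (φ : A →+* ℝ) (g h : A[X])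
    (hh : 0 < h.natDegree) (hlc : φ h.leadingCoeff ≠ 0) (y : ℝ) (hy : ev φ h y = 0) :
    SignType.sign (ev φ g y) = SignType.sign (ev φ (pseudoRem g h) y) := by
  obtain ⟨⟨N, q, hq⟩, -⟩ := pseudoRem_spec g h hh
  have h1 := congrArg (fun r => ev φ r y) hq
  simp only [ev, Polynomial.map_mul, Polynomial.map_add, map_C, eval_mul, eval_add, eval_C,
    map_pow, Polynomial.map_pow, eval_pow] at h1 hy ⊢
  rw [hy, mul_zero, zero_add] at h1
  have h2 : 0 < φ h.leadingCoeff ^ (2 * N) := by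
    rw [pow_mul]; positivity
  rw [← h1, sign_mul, sign_pos h2, one_mul]

theorem monotoneOn_eval (p : ℝ[X]) {a b : ℝ} (h : ∀ x ∈ Ioo a b, 0 ≤ p.derivative.eval x) :
    MonotoneOn (fun x => p.eval x) (Icc a b) := by
  apply monotoneOn_of_deriv_nonneg (convex_Icc a b) p.continuous.continuousOn
    p.differentiable.differentiableOn
  intro x hx
  rw [interior_Icc] at hx
  rw [Polynomial.deriv]
  exact h x hx

theorem strictMonoOn_eval (p : ℝ[X]) {a b : ℝ} (h : ∀ x ∈ Ioo a b, 0 < p.derivative.eval x) :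
    StrictMonoOn (fun x => p.eval x) (Icc a b) := by
  apply strictMonoOn_of_deriv_pos (convex_Icc a b) p.continuous.continuousOn
  intro x hx
  rw [interior_Icc] at hx
  rw [Polynomial.deriv]
  exact h x hx

/-- A polynomial with values in a bounded interval on a left half-line is constant. -/
theorem derivative_eq_zero_of_bounded (q : ℝ[X]) (b M : ℝ)
    (h : ∀ x ≤ b, |q.eval x| ≤ M) : q.derivative = 0 := by
  have h1 : (q.comp (-X)).degree ≤ 0 := by
    rw [← Polynomial.isBoundedUnder_abs_atTop_iff]
    refine ⟨M, ?_⟩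
    rw [eventually_map]
    filter_upwards [eventually_ge_atTop (-b)] with x hx
    simpa using h (-x) (by linarith)
  have h2 : q.natDegree = 0 := by
    have := natDegree_eq_zero_iff_degree_le_zero.2 h1
    simpa [natDegree_comp] using this
  exact derivative_of_natDegree_zero h2

/-! ### Signs of a monotone polynomial on a cell -/

section Monotone

variable {L : Type*} [LinearOrder L]

/-- Two monotone partitions `c`, `d` of the line with the same cells in the same order; `p` and
`q` increase on the open cell `k` and have equal signs on the non-open cells. If `p` takes a
negative value on the cell `k` of `c`, then so does `q` on the cell `k` of `d`: the sign of `q`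
at the left end of the cell is that of `p`, as the left ends lie in cells with the same label. -/
theorem exists_neg {c d : ℝ → L} (hc : Monotone c) (hd : Monotone d)
    (hcd : ∀ y, ∃ y', c y = d y') (hdc : ∀ y', ∃ y, c y = d y') (p q : ℝ[X]) (k : L)
    (hJ : IsOpen (d ⁻¹' {k}))  (hI : IsOpen (c ⁻¹' {k}))
    (hp : ∀ y, c y = k → 0 < p.derivative.eval y)
    (hq : ∀ y, d y = k → 0 < q.derivative.eval y)
    (hm : ∀ y y', c y = d y' → ¬ IsOpen (d ⁻¹' {d y'}) →
      SignType.sign (p.eval y) = SignType.sign (q.eval y'))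
    (y₀ : ℝ) (hy₀ : c y₀ = k) (hneg : p.eval y₀ < 0) : ∃ y', d y' = k ∧ q.eval y' < 0 := by
  by_contra! hcon
  obtain ⟨w, hw⟩ := hcd y₀
  rw [hy₀] at hw
  set J := d ⁻¹' {k} with hJdef
  have hwJ : w ∈ J := hw.symm
  by_cases hbdd : BddBelow J
  · -- `a'` is the left end of the cell `k` of `d`
    set a' := sInf J with ha'
    have ha'le : ∀ x ∈ J, a' ≤ x := fun x hx => csInf_le hbdd hx
    have ha'J : a' ∉ J := by
      intro hmem
      obtain ⟨ε, hε, hball⟩ := Metric.isOpen_iff.1 hJ a' hmem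
      have : a' - ε / 2 ∈ J := hball (by
        rw [Metric.mem_ball, Real.dist_eq, abs_lt]; constructor <;> linarith)
      linarith [ha'le _ this]
    have ha'k : d a' < k := lt_of_le_of_ne (by rw [hw]; exact hd (ha'le w hwJ)) ha'J
    have hqa' : 0 ≤ q.eval a' := by
      have hcl : a' ∈ closure J := csInf_mem_closure ⟨w, hwJ⟩ hbdd
      have : J ⊆ {x | 0 ≤ q.eval x} := fun x hx => hcon x hx
      exact (isClosed_le continuous_const q.continuous).closure_subset_iff.2 this hcl
    have hnot : ¬ IsOpen (d ⁻¹' {d a'}) := by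
      intro ho
      obtain ⟨ε, hε, hball⟩ := Metric.isOpen_iff.1 ho a' rfl
      obtain ⟨x, hxJ, hx⟩ := exists_lt_of_csInf_lt ⟨w, hwJ⟩ (show sInf J < a' + ε by linarith)
      have h1 : d x = d a' := hball (by
        rw [Metric.mem_ball, Real.dist_eq, abs_lt]
        constructor <;> linarith [ha'le x hxJ])
      exact ha'k.ne (h1.symm.trans hxJ)
    set I := c ⁻¹' {k} with hIdef
    have hyI : y₀ ∈ I := hy₀
    obtain ⟨z, hz⟩ := hdc a'
    have hzI : ∀ x ∈ I, z ≤ x := by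
      intro x hx
      by_contra! hlt
      have h1 := hc hlt.le
      rw [show c x = k from hx, hz] at h1
      exact absurd h1 (not_le.2 ha'k)
    have hbI : BddBelow I := ⟨z, hzI⟩
    set a := sInf I with ha
    have hale : ∀ x ∈ I, a ≤ x := fun x hx => csInf_le hbI hx
    have haI : a ∉ I := by
      intro hmem
      obtain ⟨ε, hε, hball⟩ := Metric.isOpen_iff.1 hI a hmem
      have : a - ε / 2 ∈ I := hball (by
        rw [Metric.mem_ball, Real.dist_eq, abs_lt]; constructor <;> linarith)
      linarith [hale _ this]
    have hak : c a < k := lt_of_le_of_ne (by rw [← hy₀]; exact hc (hale y₀ hyI)) haI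
    have hza : z ≤ a := le_csInf ⟨y₀, hyI⟩ hzI
    obtain ⟨z', hz'⟩ := hcd a
    have hz'J : z' ≤ a' := by
      refine le_csInf ⟨w, hwJ⟩ fun x hx => ?_
      by_contra! hlt
      have h1 := hd hlt.le
      rw [show d x = k from hx, ← hz'] at h1
      exact absurd h1 (not_le.2 hak)
    have hca : c a = d a' :=
      le_antisymm (hz' ▸ hd hz'J) (hz ▸ hc hza)
    have hs := hm a a' hca hnot
    have hpa : 0 ≤ p.eval a := by
      rw [← sign_nonneg_iff, hs, sign_nonneg_iff]; exact hqa'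
    have hmono := monotoneOn_eval p (a := a) (b := y₀) (by
      intro x hx
      refine (hp x ?_).le
      obtain ⟨i, hiI, hi⟩ := exists_lt_of_csInf_lt ⟨y₀, hyI⟩ hx.1
      apply le_antisymm
      · rw [← hy₀]; exact hc hx.2.le
      · rw [← show c i = k from hiI]; exact hc hi.le)
    have hay := hale y₀ hyI
    have h2 := hmono (left_mem_Icc.2 hay) (right_mem_Icc.2 hay) hay
    simp only at h2
    linarith
  · -- the cell `k` of `d` is a left half-line, on which `q` would be bounded
    have hall : ∀ x ≤ w, d x = k := by
      intro x hx
      rw [not_bddBelow_iff] at hbdd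
      obtain ⟨v, hv, hvx⟩ := hbdd x
      apply le_antisymm
      · rw [hw]; exact hd hx
      · rw [← show d v = k from hv]; exact hd hvx.le
    have hder := derivative_eq_zero_of_bounded q w (q.eval w) (by
      intro x hx
      rw [abs_of_nonneg (hcon x (hall x hx))]
      exact monotoneOn_eval q (a := x) (b := w) (fun t ht => (hq t (hall t ht.2.le)).le)
        (left_mem_Icc.2 hx) (right_mem_Icc.2 hx) hx)
    have := hq w hw.symm
    rw [hder] at this
    simp at this

theorem exists_pos {c d : ℝ → L} (hc : Monotone c) (hd : Monotone d)
    (hcd : ∀ y, ∃ y', c y = d y') (hdc : ∀ y', ∃ y, c y = d y') (p q : ℝ[X]) (k : L)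
    (hJ : IsOpen (d ⁻¹' {k}))  (hI : IsOpen (c ⁻¹' {k}))
    (hp : ∀ y, c y = k → 0 < p.derivative.eval y)
    (hq : ∀ y, d y = k → 0 < q.derivative.eval y)
    (hm : ∀ y y', c y = d y' → ¬ IsOpen (d ⁻¹' {d y'}) →
      SignType.sign (p.eval y) = SignType.sign (q.eval y'))
    (y₀ : ℝ) (hy₀ : c y₀ = k) (hpos : 0 < p.eval y₀) : ∃ y', d y' = k ∧ 0 < q.eval y' := by
  -- reflect the line and change the sign of both polynomials
  have hopen : ∀ (e : ℝ → L) (l : L), IsOpen (e ⁻¹' {l}) →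
      IsOpen ((fun y => OrderDual.toDual (e (-y))) ⁻¹' {OrderDual.toDual l}) := fun e l h =>
    h.preimage continuous_neg
  obtain ⟨y', hy', hneg⟩ := exists_neg (L := Lᵒᵈ)
    (c := fun y => OrderDual.toDual (c (-y))) (d := fun y => OrderDual.toDual (d (-y)))
    (fun x y hxy => OrderDual.toDual_le_toDual.2 (hc (neg_le_neg hxy)))
    (fun x y hxy => OrderDual.toDual_le_toDual.2 (hd (neg_le_neg hxy)))
    (fun y => by
      obtain ⟨y', h⟩ := hcd (-y)
      exact ⟨-y', by simp [h]⟩)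
    (fun y => by
      obtain ⟨y', h⟩ := hdc (-y)
      exact ⟨-y', by simp [h]⟩)
    (-(p.comp (-X))) (-(q.comp (-X))) (OrderDual.toDual k) (hopen d k hJ) (hopen c k hI)
    (fun y hy => by simpa [derivative_comp] using hp (-y) hy)
    (fun y hy => by simpa [derivative_comp] using hq (-y) hy)
    (fun y y' h hn => by
      have := hm (-y) (-y') h (fun ho => hn (hopen d _ ho))
      simp only [eval_neg, eval_comp, eval_X, Left.sign_neg, this])
    (-y₀) (by simp [hy₀]) (by simpa using hpos)
  exact ⟨-y', hy', by simpa using hneg⟩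

theorem exists_sign_eq_of_pos {c d : ℝ → L} (hc : Monotone c) (hd : Monotone d)
    (hcd : ∀ y, ∃ y', c y = d y') (hdc : ∀ y', ∃ y, c y = d y') (p q : ℝ[X]) (k : L)
    (hJ : IsOpen (d ⁻¹' {k}))  (hI : IsOpen (c ⁻¹' {k}))
    (hp : ∀ y, c y = k → 0 < p.derivative.eval y)
    (hq : ∀ y, d y = k → 0 < q.derivative.eval y)
    (hm : ∀ y y', c y = d y' → ¬ IsOpen (d ⁻¹' {d y'}) →
      SignType.sign (p.eval y) = SignType.sign (q.eval y'))
    (y₀ : ℝ) (hy₀ : c y₀ = k) :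
    ∃ y', d y' = k ∧ SignType.sign (p.eval y₀) = SignType.sign (q.eval y') := by
  rcases lt_trichotomy (p.eval y₀) 0 with h | h | h
  · obtain ⟨y', h1, h2⟩ := exists_neg hc hd hcd hdc p q k hJ hI hp hq hm y₀ hy₀ h
    exact ⟨y', h1, by rw [sign_neg h, sign_neg h2]⟩
  · -- a root in the interior of the cell: `p`, hence `q`, takes both signs there
    obtain ⟨ε, hε, hball⟩ := Metric.isOpen_iff.1 hI y₀ hy₀
    have hmem : ∀ x ∈ Icc (y₀ - ε / 2) (y₀ + ε / 2), c x = k := fun x hx => hball (by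
      rw [Metric.mem_ball, Real.dist_eq, abs_lt]; constructor <;> linarith [hx.1, hx.2])
    have hmono := strictMonoOn_eval p (a := y₀ - ε / 2) (b := y₀ + ε / 2)
      (fun x hx => hp x (hmem x (Ioo_subset_Icc_self hx)))
    have m0 : y₀ ∈ Icc (y₀ - ε / 2) (y₀ + ε / 2) := ⟨by linarith, by linarith⟩
    have m1 : y₀ - ε / 2 ∈ Icc (y₀ - ε / 2) (y₀ + ε / 2) := ⟨by linarith, by linarith⟩
    have m2 : y₀ + ε / 2 ∈ Icc (y₀ - ε / 2) (y₀ + ε / 2) := ⟨by linarith, by linarith⟩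
    have h1 := hmono m1 m0 (by linarith)
    have h2 := hmono m0 m2 (by linarith)
    simp only [h] at h1 h2
    obtain ⟨y₁, e1, n1⟩ := exists_neg hc hd hcd hdc p q k hJ hI hp hq hm _ (hmem _ m1) h1
    obtain ⟨y₂, e2, n2⟩ := exists_pos hc hd hcd hdc p q k hJ hI hp hq hm _ (hmem _ m2) h2
    have hord : OrdConnected (d ⁻¹' {k}) := ordConnected_singleton.preimage_mono hd
    obtain ⟨y', hy', h0⟩ := intermediate_value_uIcc (a := y₁) (b := y₂)
      (f := fun x => q.eval x) q.continuous.continuousOn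
      (show (0 : ℝ) ∈ _ from ⟨(min_le_left _ _).trans n1.le, n2.le.trans (le_max_right _ _)⟩)
    exact ⟨y', hord.uIcc_subset e1 e2 hy', by rw [h, show q.eval y' = 0 from h0]⟩
  · obtain ⟨y', h1, h2⟩ := exists_pos hc hd hcd hdc p q k hJ hI hp hq hm y₀ hy₀ h
    exact ⟨y', h1, by rw [sign_pos h, sign_pos h2]⟩

/-- The case of either direction of monotonicity on the open cell `k`. -/
theorem exists_sign_eq {c d : ℝ → L} (hc : Monotone c) (hd : Monotone d)
    (hcd : ∀ y, ∃ y', c y = d y') (hdc : ∀ y', ∃ y, c y = d y') (p q : ℝ[X]) (k : L)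
    (hJ : IsOpen (d ⁻¹' {k}))  (hI : IsOpen (c ⁻¹' {k})) (ε : SignType) (hε : ε ≠ 0)
    (hp : ∀ y, c y = k → SignType.sign (p.derivative.eval y) = ε)
    (hq : ∀ y, d y = k → SignType.sign (q.derivative.eval y) = ε)
    (hm : ∀ y y', c y = d y' → ¬ IsOpen (d ⁻¹' {d y'}) →
      SignType.sign (p.eval y) = SignType.sign (q.eval y'))
    (y₀ : ℝ) (hy₀ : c y₀ = k) :
    ∃ y', d y' = k ∧ SignType.sign (p.eval y₀) = SignType.sign (q.eval y') := by
  rcases ε with _ | _ | _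
  · exact absurd rfl hε
  · obtain ⟨y', h1, h2⟩ := exists_sign_eq_of_pos hc hd hcd hdc (-p) (-q) k hJ hI
      (fun y hy => by
        simpa using sign_eq_neg_one_iff.1 (hp y hy))
      (fun y hy => by
        simpa using sign_eq_neg_one_iff.1 (hq y hy))
      (fun y y' h hn => by simp [Left.sign_neg, hm y y' h hn]) y₀ hy₀
    exact ⟨y', h1, by simpa [Left.sign_neg] using h2⟩
  · exact exists_sign_eq_of_pos hc hd hcd hdc p q k hJ hI
      (fun y hy => sign_eq_one_iff.1 (hp y hy)) (fun y hy => sign_eq_one_iff.1 (hq y hy))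
      hm y₀ hy₀

end Monotone

/-! ### Matching sign diagrams -/

section Matching

variable {A : Type*} [CommRing A]

/-- The functions `c` and `d` partition the real line, in the same order, into cells on which the
specializations of the polynomials in `s` along `φ`, respectively `ψ`, have constant and equal
signs. Cells are labelled by `L`; a cell is open unless some nonconstant polynomial in `s`, of
nonvanishing leading coefficient, is zero on it. -/
structure Matching (φ ψ : A →+* ℝ) (s : Set A[X]) {L : Type} [LinearOrder L] (c d : ℝ → L) :
    Prop where
  mono_left : Monotone c
  mono_right : Monotone d
  exists_right : ∀ y, ∃ y', c y = d y'
  exists_left : ∀ y', ∃ y, c y = d y'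
  sign_eq : ∀ y y', c y = d y' → ∀ g ∈ s, SignType.sign (ev φ g y) = SignType.sign (ev ψ g y')
  open_or_root : ∀ y y', c y = d y' → (IsOpen (c ⁻¹' {c y}) ∧ IsOpen (d ⁻¹' {d y'})) ∨
    ∃ h ∈ s, 0 < h.natDegree ∧ φ h.leadingCoeff ≠ 0 ∧ ψ h.leadingCoeff ≠ 0 ∧ ev φ h y = 0

variable {φ ψ : A →+* ℝ} {s : Set A[X]} {L : Type} [LinearOrder L] {c d : ℝ → L}

theorem Matching.symm (M : Matching φ ψ s c d) : Matching ψ φ s d c where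
  mono_left := M.mono_right
  mono_right := M.mono_left
  exists_right y := (M.exists_left y).imp fun _ h => h.symm
  exists_left y := (M.exists_right y).imp fun _ h => h.symm
  sign_eq y y' h g hg := (M.sign_eq y' y h.symm g hg).symm
  open_or_root y y' h := by
    rcases M.open_or_root y' y h.symm with ⟨h1, h2⟩ | ⟨g, hg, h1, h2, h3, h4⟩
    · exact Or.inl ⟨h2, h1⟩
    · refine Or.inr ⟨g, hg, h1, h3, h2, ?_⟩
      have := M.sign_eq y' y h.symm g hg
      rwa [h4, sign_zero, eq_comm, sign_eq_zero_iff] at this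

theorem Matching.sign_const (M : Matching φ ψ s c d) {y z : ℝ} (h : c y = c z) {g : A[X]}
    (hg : g ∈ s) : SignType.sign (ev φ g y) = SignType.sign (ev φ g z) := by
  obtain ⟨y', hy'⟩ := M.exists_right y
  rw [M.sign_eq y y' hy' g hg, M.sign_eq z y' (h ▸ hy') g hg]

/-- Refinement of the partition `c` by the sign of `g`. The factor given by the sign of the
derivative turns the sign of `g` into a monotone function on each cell. -/
noncomputable def refine {L : Type} (φ : A →+* ℝ) (g : A[X]) (c : ℝ → L) (y : ℝ) : L ×ₗ SignType :=
  toLex (c y, SignType.sign (ev φ (derivative g) y) * SignType.sign (ev φ g y))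

theorem refine_eq_iff {L : Type} {φ ψ : A →+* ℝ} {g : A[X]} {c d : ℝ → L} {y y' : ℝ} :
    refine φ g c y = refine ψ g d y' ↔ c y = d y' ∧
      SignType.sign (ev φ (derivative g) y) * SignType.sign (ev φ g y) =
      SignType.sign (ev ψ (derivative g) y') * SignType.sign (ev ψ g y') := by
  simp [refine, Prod.ext_iff]

theorem ev_derivative (φ : A →+* ℝ) (g : A[X]) (y : ℝ) :
    ev φ (derivative g) y = (derivative (g.map φ)).eval y := by
  rw [ev, derivative_map]

theorem continuous_ev (φ : A →+* ℝ) (g : A[X]) : Continuous (ev φ g) :=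
  (g.map φ).continuous

theorem Matching.monotone_refine (M : Matching φ ψ s c d) (g : A[X])
    (hder : derivative g ∈ s) : Monotone (refine φ g c) := by
  intro y z hyz
  rw [refine, refine, Prod.Lex.toLex_le_toLex]
  rcases (M.mono_left hyz).lt_or_eq with h | h
  · exact Or.inl h
  refine Or.inr ⟨h, ?_⟩
  have hconst : ∀ x ∈ Icc y z, SignType.sign (ev φ (derivative g) x) =
      SignType.sign (ev φ (derivative g) y) := fun x hx =>
    M.sign_const (le_antisymm (h ▸ M.mono_left hx.2) (M.mono_left hx.1)) hder
  simp only
  rw [hconst z (right_mem_Icc.2 hyz)]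
  rcases lt_trichotomy (ev φ (derivative g) y) 0 with h0 | h0 | h0
  · have hmono := monotoneOn_eval (-(g.map φ)) (a := y) (b := z) (by
      intro x hx
      have := hconst x (Ioo_subset_Icc_self hx)
      rw [sign_neg h0, sign_eq_neg_one_iff, ev_derivative] at this
      simpa using this.le)
    have h1 := hmono (left_mem_Icc.2 hyz) (right_mem_Icc.2 hyz) hyz
    have h2 : SignType.sign (- ev φ g y) ≤ SignType.sign (- ev φ g z) :=
      SignType.sign.monotone (by simpa [ev] using h1)
    rw [Left.sign_neg, Left.sign_neg] at h2
    rwa [sign_neg h0, neg_one_mul, neg_one_mul]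
  · simp [h0]
  · have hmono := monotoneOn_eval (g.map φ) (a := y) (b := z) (by
      intro x hx
      have := hconst x (Ioo_subset_Icc_self hx)
      rw [sign_pos h0, sign_eq_one_iff, ev_derivative] at this
      exact this.le)
    have h1 := hmono (left_mem_Icc.2 hyz) (right_mem_Icc.2 hyz) hyz
    rw [sign_pos h0, one_mul, one_mul]
    exact SignType.sign.monotone h1

/-- On an open cell the derivative of `g` does not vanish. -/
theorem Matching.sign_derivative_ne_zero (M : Matching φ ψ s c d) (g : A[X])
    (hdeg : 0 < g.natDegree) (hφ : φ g.leadingCoeff ≠ 0) (hder : derivative g ∈ s) (y : ℝ)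
    (ho : IsOpen (c ⁻¹' {c y})) : SignType.sign (ev φ (derivative g) y) ≠ 0 := by
  intro h0
  have hz : derivative (g.map φ) = 0 := by
    apply Polynomial.eq_zero_of_infinite_isRoot
    apply (infinite_of_mem_nhds y (ho.mem_nhds rfl)).mono
    intro x hx
    have h1 := M.sign_const (y := x) (z := y) hx hder
    rw [h0, sign_eq_zero_iff, ev_derivative] at h1
    exact h1
  have := derivative_eq_zero.1 hz
  rw [natDegree_map_of_leadingCoeff_ne_zero φ hφ] at this
  omega

theorem Matching.sign_eq_of_not_open (M : Matching φ ψ s c d) (g : A[X])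
    (hrem : ∀ h ∈ s, 0 < h.natDegree → pseudoRem g h ∈ s) (y y' : ℝ) (h : c y = d y')
    (hr : ∃ h ∈ s, 0 < h.natDegree ∧ φ h.leadingCoeff ≠ 0 ∧ ψ h.leadingCoeff ≠ 0 ∧
      ev φ h y = 0) :
    SignType.sign (ev φ g y) = SignType.sign (ev ψ g y') := by
  obtain ⟨f, hf, hdeg, h1, h2, h3⟩ := hr
  have h4 : ev ψ f y' = 0 := by
    have := M.sign_eq y y' h f hf
    rwa [h3, sign_zero, eq_comm, sign_eq_zero_iff] at this
  rw [sign_ev_of_root φ g f hdeg h1 y h3, sign_ev_of_root ψ g f hdeg h2 y' h4]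
  exact M.sign_eq y y' h _ (hrem f hf hdeg)

theorem Matching.exists_refine (M : Matching φ ψ s c d) (g : A[X])
    (hdeg : 0 < g.natDegree) (hφ : φ g.leadingCoeff ≠ 0)
    (hder : derivative g ∈ s) (hrem : ∀ h ∈ s, 0 < h.natDegree → pseudoRem g h ∈ s) (y : ℝ) :
    ∃ y', refine φ g c y = refine ψ g d y' := by
  obtain ⟨w, hw⟩ := M.exists_right y
  rcases M.open_or_root y w hw with ⟨hI, hJ⟩ | hr
  · obtain ⟨y', h1, h2⟩ := exists_sign_eq M.mono_left M.mono_right M.exists_right M.exists_left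
      (g.map φ) (g.map ψ) (c y) (hw ▸ hJ) hI (SignType.sign (ev φ (derivative g) y))
      (M.sign_derivative_ne_zero g hdeg hφ hder y hI)
      (fun z hz => by rw [← ev_derivative]; exact M.sign_const hz hder)
      (fun z hz => by rw [← ev_derivative]; exact (M.sign_eq y z hz.symm _ hder).symm)
      (fun z z' hz hn => by
        rcases M.open_or_root z z' hz with h | h
        · exact absurd h.2 hn
        · exact M.sign_eq_of_not_open g hrem z z' hz h)
      y rfl
    refine ⟨y', refine_eq_iff.2 ⟨h1.symm, ?_⟩⟩
    rw [M.sign_eq y y' h1.symm _ hder]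
    exact congrArg _ h2
  · exact ⟨w, refine_eq_iff.2 ⟨hw, by
      rw [M.sign_eq_of_not_open g hrem y w hw hr, M.sign_eq y w hw _ hder]⟩⟩

theorem Matching.sign_eq_refine (M : Matching φ ψ s c d) (g : A[X])
    (hdeg : 0 < g.natDegree) (hφ : φ g.leadingCoeff ≠ 0)
    (hder : derivative g ∈ s) (hrem : ∀ h ∈ s, 0 < h.natDegree → pseudoRem g h ∈ s) (y y' : ℝ)
    (h : refine φ g c y = refine ψ g d y') :
    SignType.sign (ev φ g y) = SignType.sign (ev ψ g y') := by
  obtain ⟨h1, h2⟩ := refine_eq_iff.1 h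
  rcases M.open_or_root y y' h1 with ⟨hI, -⟩ | hr
  · rw [← M.sign_eq y y' h1 _ hder] at h2
    have h3 := M.sign_derivative_ne_zero g hdeg hφ hder y hI
    revert h2 h3
    generalize SignType.sign (ev φ (derivative g) y) = a
    generalize SignType.sign (ev φ g y) = b
    generalize SignType.sign (ev ψ g y') = e
    revert a b e
    decide
  · exact M.sign_eq_of_not_open g hrem y y' h1 hr

theorem Matching.isOpen_refine (M : Matching φ ψ s c d) (g : A[X])
    (hder : derivative g ∈ s) (y : ℝ) (hI : IsOpen (c ⁻¹' {c y}))
    (hne : SignType.sign (ev φ (derivative g) y) ≠ 0) (hg : ev φ g y ≠ 0) :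
    IsOpen (refine φ g c ⁻¹' {refine φ g c y}) := by
  have hset : refine φ g c ⁻¹' {refine φ g c y} =
      c ⁻¹' {c y} ∩ {z | 0 < SignType.sign (ev φ g y) * SignType.sign (ev φ g z)} := by
    ext z
    simp only [mem_preimage, mem_singleton_iff, refine_eq_iff, mem_inter_iff, mem_ofPred_eq]
    refine and_congr_right fun hz => ?_
    rw [M.sign_const hz hder]
    have hg' : SignType.sign (ev φ g y) ≠ 0 := by simpa using hg
    revert hne hg'
    generalize SignType.sign (ev φ (derivative g) y) = a
    generalize SignType.sign (ev φ g y) = b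
    generalize SignType.sign (ev φ g z) = e
    revert a b e
    decide
  rw [hset]
  refine hI.inter ?_
  have : {z | 0 < SignType.sign (ev φ g y) * SignType.sign (ev φ g z)} =
      {z | 0 < ev φ g y * ev φ g z} := by
    ext z
    rw [mem_ofPred_eq, mem_ofPred_eq, ← sign_mul, ← sign_eq_one_iff (a := ev φ g y * ev φ g z)]
    generalize SignType.sign (ev φ g y * ev φ g z) = a
    revert a
    decide
  rw [this]
  exact isOpen_lt continuous_const (continuous_const.mul (continuous_ev φ g))

/-- The inductive step: a polynomial whose derivative and pseudo-remainders are already under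
control can be added to a matching. -/
theorem Matching.insert (M : Matching φ ψ s c d) (g : A[X])
    (hdeg : 0 < g.natDegree) (hφ : φ g.leadingCoeff ≠ 0) (hψ : ψ g.leadingCoeff ≠ 0)
    (hder : derivative g ∈ s) (hrem : ∀ h ∈ s, 0 < h.natDegree → pseudoRem g h ∈ s) :
    Matching φ ψ (insert g s) (refine φ g c) (refine ψ g d) where
  mono_left := M.monotone_refine g hder
  mono_right := M.symm.monotone_refine g hder
  exists_right := M.exists_refine g hdeg hφ hder hrem
  exists_left y' := (M.symm.exists_refine g hdeg hψ hder hrem y').imp fun _ h => h.symm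
  sign_eq := by
    rintro y y' h f (rfl | hf)
    · exact M.sign_eq_refine f hdeg hφ hder hrem y y' h
    · exact M.sign_eq y y' (refine_eq_iff.1 h).1 f hf
  open_or_root y y' h := by
    have h1 := (refine_eq_iff.1 h).1
    rcases M.open_or_root y y' h1 with ⟨hI, hJ⟩ | ⟨f, hf, hr⟩
    · by_cases h0 : ev φ g y = 0
      · exact Or.inr ⟨g, mem_insert _ _, hdeg, hφ, hψ, h0⟩
      · have h0' : ev ψ g y' ≠ 0 := by
          rw [← sign_ne_zero, ← M.sign_eq_refine g hdeg hφ hder hrem y y' h, sign_ne_zero]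
          exact h0
        exact Or.inl ⟨M.isOpen_refine g hder y hI
            (M.sign_derivative_ne_zero g hdeg hφ hder y hI) h0,
          M.symm.isOpen_refine g hder y' hJ
            (M.symm.sign_derivative_ne_zero g hdeg hψ hder y' hJ) h0'⟩
    · exact Or.inr ⟨f, mem_insert_of_mem _ hf, hr⟩

/-- A polynomial whose signs are already matched can be added without refining the cells. -/
theorem Matching.insert_trivial (M : Matching φ ψ s c d) (g : A[X])
    (hg : ∀ y y', c y = d y' → SignType.sign (ev φ g y) = SignType.sign (ev ψ g y')) :
    Matching φ ψ (Insert.insert g s) c d where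
  mono_left := M.mono_left
  mono_right := M.mono_right
  exists_right := M.exists_right
  exists_left := M.exists_left
  sign_eq := by
    rintro y y' h f (rfl | hf)
    · exact hg y y' h
    · exact M.sign_eq y y' h f hf
  open_or_root y y' h := (M.open_or_root y y' h).imp_right
    fun ⟨f, hf, hr⟩ => ⟨f, mem_insert_of_mem _ hf, hr⟩

end Matching

/-! ### Elimination of one variable -/

section Closure

variable {A : Type*} [CommRing A]

/-- The closure of `G` under the operations that feed the induction: deleting the leading term,
differentiation, and pseudo-remainders. Each of them lowers the degree of all its arguments. -/
inductive Derived (G : Set A[X]) : A[X] → Prop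
  | base (g : A[X]) : g ∈ G → Derived G g
  | erase (g : A[X]) : Derived G g → 0 < g.natDegree → Derived G g.eraseLead
  | deriv (g : A[X]) : Derived G g → 0 < g.natDegree → Derived G (derivative g)
  | rem (g h : A[X]) : Derived G g → Derived G h → 0 < h.natDegree →
      h.natDegree ≤ g.natDegree → Derived G (pseudoRem g h)

theorem natDegree_eraseLead_lt {g : A[X]} (hg : 0 < g.natDegree) :
    g.eraseLead.natDegree < g.natDegree := by
  have := eraseLead_natDegree_le g
  omega

theorem finite_derived {G : Set A[X]} (hG : G.Finite) : {g | Derived G g}.Finite := by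
  obtain ⟨m, hm⟩ : ∃ m, ∀ g ∈ G, g.natDegree < m := by
    obtain ⟨m, hm⟩ := (hG.image natDegree).bddAbove
    exact ⟨m + 1, fun g hg => Nat.lt_succ_of_le (hm (mem_image_of_mem _ hg))⟩
  have hbound : ∀ g, Derived G g → g.natDegree < m := by
    intro g hg
    induction hg with
    | base g hg => exact hm g hg
    | erase g _ h ih => exact (natDegree_eraseLead_lt h).trans ih
    | deriv g _ h ih => exact (natDegree_derivative_lt h.ne').trans ih
    | rem g h _ _ hh _ _ ih => exact (pseudoRem_spec g h hh).2.trans ih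
  have key : ∀ k, {g | Derived G g ∧ m ≤ g.natDegree + k}.Finite := by
    intro k
    induction k with
    | zero =>
      convert Set.finite_empty
      ext g
      simp only [mem_ofPred_eq, mem_empty_iff_false, iff_false, not_and]
      intro hg
      have := hbound g hg
      omega
    | succ k ih =>
      set T := {g | Derived G g ∧ m ≤ g.natDegree + k} with hT
      refine (hG.union ((ih.image eraseLead).union ((ih.image derivative).union
        (ih.image2 pseudoRem ih)))).subset ?_
      rintro g ⟨hg, hk⟩
      cases hg with
      | base _ hg => exact Or.inl hg
      | erase g hg h =>
        have := natDegree_eraseLead_lt h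
        exact Or.inr (Or.inl ⟨g, ⟨hg, by omega⟩, rfl⟩)
      | deriv g hg h =>
        have := natDegree_derivative_lt h.ne'
        exact Or.inr (Or.inr (Or.inl ⟨g, ⟨hg, by omega⟩, rfl⟩))
      | rem g h hg hh h0 hle =>
        have := (pseudoRem_spec g h h0).2
        exact Or.inr (Or.inr (Or.inr ⟨g, ⟨hg, by omega⟩, h, ⟨hh, by omega⟩, rfl⟩))
  exact (key m).subset fun g hg => ⟨hg, by omega⟩

theorem ev_eq_ev_eraseLead (φ : A →+* ℝ) (g : A[X]) (h : φ g.leadingCoeff = 0) (y : ℝ) :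
    ev φ g y = ev φ g.eraseLead y := by
  conv_lhs => rw [← eraseLead_add_monomial_natDegree_leadingCoeff g]
  rw [ev, Polynomial.map_add, map_monomial, h, monomial_zero_right, add_zero, ev]

/-- Elimination of one variable, in back-and-forth form: finitely many signs of coefficient
polynomials determine which sign vectors of `G` are realized on the line. -/
theorem exists_finite_signs (G : Set A[X]) (hG : G.Finite) :
    ∃ H : Set A, H.Finite ∧ ∀ φ ψ : A →+* ℝ,
      (∀ a ∈ H, SignType.sign (φ a) = SignType.sign (ψ a)) →
      ∀ y, ∃ y', ∀ g ∈ G, SignType.sign (ev φ g y) = SignType.sign (ev ψ g y') := by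
  classical
  have hfin := finite_derived hG
  refine ⟨leadingCoeff '' {g | Derived G g}, hfin.image _, fun φ ψ hsign => ?_⟩
  have hlc : ∀ g, Derived G g →
      SignType.sign (φ g.leadingCoeff) = SignType.sign (ψ g.leadingCoeff) :=
    fun g hg => hsign _ ⟨g, hg, rfl⟩
  have key : ∀ s : Finset A[X], (∀ g ∈ s, Derived G g) →
      (∀ g ∈ s, ∀ h, Derived G h → h.natDegree < g.natDegree → h ∈ s) →
      ∃ (L : Type) (_ : LinearOrder L) (c d : ℝ → L), Matching φ ψ (s : Set A[X]) c d := by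
    intro s
    induction s using Finset.induction_on_max_value (fun g : A[X] => g.natDegree) with
    | empty =>
      intro _ _
      exact ⟨Unit, inferInstance, fun _ => (), fun _ => (),
        monotone_const, monotone_const, fun y => ⟨y, rfl⟩, fun y => ⟨y, rfl⟩,
        fun _ _ _ g hg => by simp at hg, fun _ _ _ => Or.inl ⟨by simp, by simp⟩⟩
    | insert g s hgs hmax ih =>
      intro hder hlow
      obtain ⟨L, hL, c, d, M⟩ := ih (fun h hh => hder h (Finset.mem_insert_of_mem hh))
        (fun f hf h hh hlt => by
          rcases Finset.mem_insert.1 (hlow f (Finset.mem_insert_of_mem hf) h hh hlt) with rfl | h1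
          · exact absurd (hmax f hf) (not_le.2 hlt)
          · exact h1)
      have hg : Derived G g := hder g (Finset.mem_insert_self _ _)
      have hmem : ∀ h, Derived G h → h.natDegree < g.natDegree → h ∈ (s : Set A[X]) := by
        intro h hh hlt
        rcases Finset.mem_insert.1 (hlow g (Finset.mem_insert_self _ _) h hh hlt) with rfl | h1
        · exact absurd hlt (lt_irrefl _)
        · exact h1
      rw [Finset.coe_insert]
      rcases Nat.eq_zero_or_pos g.natDegree with h0 | hpos
      · refine ⟨L, hL, c, d, M.insert_trivial g fun y y' _ => ?_⟩
        have := hlc g hg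
        rw [leadingCoeff, h0] at this
        rw [eq_C_of_natDegree_eq_zero h0]
        simpa [ev] using this
      · by_cases hz : φ g.leadingCoeff = 0
        · have hz' : ψ g.leadingCoeff = 0 := by
            have := hlc g hg
            rwa [hz, sign_zero, eq_comm, sign_eq_zero_iff] at this
          refine ⟨L, hL, c, d, M.insert_trivial g fun y y' h => ?_⟩
          rw [ev_eq_ev_eraseLead φ g hz, ev_eq_ev_eraseLead ψ g hz']
          exact M.sign_eq y y' h _ (hmem _ (hg.erase g hpos) (natDegree_eraseLead_lt hpos))
        · have hz' : ψ g.leadingCoeff ≠ 0 := by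
            rw [← sign_ne_zero, ← hlc g hg, sign_ne_zero]
            exact hz
          refine ⟨L ×ₗ SignType, inferInstance, _, _, M.insert g hpos hz hz'
            (hmem _ (hg.deriv g hpos) (natDegree_derivative_lt hpos.ne')) fun h hh hh0 => ?_⟩
          have hd : Derived G h := hder h (Finset.mem_insert_of_mem hh)
          have hle : h.natDegree ≤ g.natDegree := hmax h hh
          exact hmem _ (Derived.rem g h hg hd hh0 hle)
            ((pseudoRem_spec g h hh0).2.trans_le hle)
  obtain ⟨L, hL, c, d, M⟩ := key hfin.toFinset (fun g hg => by simpa using hg)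
    (fun g _ h hh _ => by simpa using hh)
  intro y
  obtain ⟨y', hy'⟩ := M.exists_right y
  exact ⟨y', fun g hg => M.sign_eq y y' hy' g (by simpa using Derived.base g hg)⟩

end Closure

/-! ### Quantifier elimination -/

section Definable

theorem exists_polynomial_of_term {β : Type} (t : (Language.ring[[(univ : Set ℝ)]]).Term β) :
    ∃ P : MvPolynomial β ℝ, ∀ v : β → ℝ, t.realize v = MvPolynomial.eval v P := by
  induction t with
  | var b => exact ⟨MvPolynomial.X b, fun v => by simp⟩
  | @func n f ts ih =>
    choose P hP using ih
    rcases f with f | f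
    · cases f with
      | add => exact ⟨P 0 + P 1, fun v =>
          (Ring.CompatibleRing.funMap_add (fun i => (ts i).realize v)).trans (by simp [hP])⟩
      | mul => exact ⟨P 0 * P 1, fun v =>
          (Ring.CompatibleRing.funMap_mul (fun i => (ts i).realize v)).trans (by simp [hP])⟩
      | neg => exact ⟨-P 0, fun v =>
          (Ring.CompatibleRing.funMap_neg (fun i => (ts i).realize v)).trans (by simp [hP])⟩
      | zero => exact ⟨0, fun v =>
          (Ring.CompatibleRing.funMap_zero (fun i => (ts i).realize v)).trans (by simp)⟩
      | one => exact ⟨1, fun v =>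
          (Ring.CompatibleRing.funMap_one (fun i => (ts i).realize v)).trans (by simp)⟩
    · match n, f with
      | 0, f => exact ⟨MvPolynomial.C (f : (univ : Set ℝ)), fun v => by simp; rfl⟩
      | _ + 1, f => exact f.elim

/-- A polynomial in the variables `α ⊕ Fin (n + 1)` as a polynomial in the last variable over the
polynomials in the other ones. -/
noncomputable def splitLast {α : Type} {n : ℕ} :
    MvPolynomial (α ⊕ Fin (n + 1)) ℝ →+* Polynomial (MvPolynomial (α ⊕ Fin n) ℝ) :=
  MvPolynomial.eval₂Hom (C.comp MvPolynomial.C)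
    (Sum.elim (fun a => C (MvPolynomial.X (Sum.inl a)))
      (Fin.snoc (α := fun _ => Polynomial (MvPolynomial (α ⊕ Fin n) ℝ))
        (fun j => C (MvPolynomial.X (Sum.inr j))) X))

theorem ev_splitLast {α : Type} {n : ℕ} (v : α → ℝ) (xs : Fin n → ℝ) (y : ℝ)
    (P : MvPolynomial (α ⊕ Fin (n + 1)) ℝ) :
    ev (MvPolynomial.eval (Sum.elim v xs)) (splitLast P) y =
      MvPolynomial.eval (Sum.elim v (Fin.snoc xs y : Fin (n + 1) → ℝ)) P := by
  have : ((evalRingHom y).comp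
      (mapRingHom (MvPolynomial.eval (Sum.elim v xs)))).comp splitLast =
      MvPolynomial.eval (Sum.elim v (Fin.snoc xs y : Fin (n + 1) → ℝ)) := by
    apply MvPolynomial.ringHom_ext
    · intro r
      simp [splitLast]
    · rintro (a | i)
      · simp [splitLast]
      · refine Fin.lastCases ?_ (fun j => ?_) i <;> simp [splitLast]
  exact congrArg (fun f => f P) this

/-- Quantifier elimination for the real field: the truth value of a formula depends only on the
signs of finitely many polynomials. -/
theorem exists_signs_of_boundedFormula {α : Type} {n : ℕ}
    (φ : (Language.ring[[(univ : Set ℝ)]]).BoundedFormula α n) :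
    ∃ H : Set (MvPolynomial (α ⊕ Fin n) ℝ), H.Finite ∧ ∀ (v v' : α → ℝ) (xs xs' : Fin n → ℝ),
      (∀ P ∈ H, SignType.sign (MvPolynomial.eval (Sum.elim v xs) P) =
        SignType.sign (MvPolynomial.eval (Sum.elim v' xs') P)) →
      (φ.Realize v xs ↔ φ.Realize v' xs') := by
  induction φ with
  | falsum => exact ⟨∅, finite_empty, fun _ _ _ _ _ => Iff.rfl⟩
  | equal t₁ t₂ =>
    obtain ⟨P₁, h₁⟩ := exists_polynomial_of_term t₁
    obtain ⟨P₂, h₂⟩ := exists_polynomial_of_term t₂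
    refine ⟨{P₁ - P₂}, finite_singleton _, fun v v' xs xs' h => ?_⟩
    have h3 := h _ rfl
    rw [RingHom.map_sub, RingHom.map_sub] at h3
    simp only [BoundedFormula.Realize, h₁, h₂]
    rw [← sub_eq_zero, ← sign_eq_zero_iff, h3, sign_eq_zero_iff, sub_eq_zero]
  | @rel n l R ts =>
    rcases R with R | R
    · exact R.elim
    · exact R.elim
  | imp φ₁ φ₂ ih₁ ih₂ =>
    obtain ⟨H₁, hf₁, h₁⟩ := ih₁
    obtain ⟨H₂, hf₂, h₂⟩ := ih₂
    refine ⟨H₁ ∪ H₂, hf₁.union hf₂, fun v v' xs xs' h => ?_⟩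
    rw [BoundedFormula.realize_imp, BoundedFormula.realize_imp,
      h₁ v v' xs xs' fun P hP => h P (Or.inl hP), h₂ v v' xs xs' fun P hP => h P (Or.inr hP)]
  | @all n φ ih =>
    obtain ⟨G, hG, hφ⟩ := ih
    obtain ⟨H, hH, hsig⟩ := exists_finite_signs (splitLast '' G) (hG.image _)
    refine ⟨H, hH, ?_⟩
    have key : ∀ (v v' : α → ℝ) (xs xs' : Fin n → ℝ),
        (∀ P ∈ H, SignType.sign (MvPolynomial.eval (Sum.elim v xs) P) =
          SignType.sign (MvPolynomial.eval (Sum.elim v' xs') P)) →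
        φ.all.Realize v xs → φ.all.Realize v' xs' := by
      intro v v' xs xs' h hall
      rw [BoundedFormula.realize_all] at hall ⊢
      intro y'
      obtain ⟨y, hy⟩ := hsig (MvPolynomial.eval (Sum.elim v' xs'))
        (MvPolynomial.eval (Sum.elim v xs)) (fun P hP => (h P hP).symm) y'
      refine (hφ v v' (Fin.snoc xs y) (Fin.snoc xs' y') fun P hP => ?_).1 (hall y)
      have := hy _ (mem_image_of_mem _ hP)
      rw [ev_splitLast, ev_splitLast] at this
      exact this.symm
    exact fun v v' xs xs' h => ⟨key v v' xs xs' h, key v' v xs' xs fun P hP => (h P hP).symm⟩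

theorem exists_signs_of_semialgebraic {k : ℕ} {S : Set (Fin k → ℝ)}
    (hS : OMinPaper.Semialgebraic S) :
    ∃ H : Set (MvPolynomial (Fin k) ℝ), H.Finite ∧ ∀ v v' : Fin k → ℝ,
      (∀ P ∈ H, SignType.sign (MvPolynomial.eval v P) =
        SignType.sign (MvPolynomial.eval v' P)) → (v ∈ S ↔ v' ∈ S) := by
  obtain ⟨φ, rfl⟩ := hS
  obtain ⟨H, hH, h⟩ := exists_signs_of_boundedFormula φ
  refine ⟨MvPolynomial.rename (Sum.elim id Fin.elim0) '' H, hH.image _, fun v v' hv => ?_⟩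
  rw [mem_ofPred_eq, mem_ofPred_eq, Formula.Realize, Formula.Realize]
  refine h v v' _ _ fun P hP => ?_
  have := hv _ (mem_image_of_mem _ hP)
  rw [MvPolynomial.eval_rename, MvPolynomial.eval_rename] at this
  have e : ∀ (w : Fin k → ℝ) (z : Fin 0 → ℝ), w ∘ Sum.elim id Fin.elim0 = Sum.elim w z := by
    intro w z
    ext (i | i)
    · rfl
    · exact i.elim0
  rw [← e v, ← e v']
  exact this

end Definable

/-! ### Signs along the curve and along rays -/

section Asymptotics

/-- Evaluation of `Q ∈ ℝ[u][x]` at `(x, u)`. -/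
noncomputable def ev₂ (Q : ℝ[X][X]) (x u : ℝ) : ℝ := ev (evalRingHom u) Q x

theorem ev₂_eq (Q : ℝ[X][X]) (x u : ℝ) :
    ev₂ Q x u = x * ev₂ Q.divX x u + (Q.coeff 0).eval u := by
  conv_lhs => rw [← divX_mul_X_add Q]
  simp only [ev₂, ev, Polynomial.map_add, Polynomial.map_mul, map_X, map_C, eval_add, eval_mul,
    eval_X, eval_C, coe_evalRingHom]
  ring

theorem continuous_ev₂ (Q : ℝ[X][X]) : Continuous fun z : ℝ × ℝ => ev₂ Q z.1 z.2 := by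
  induction Q using Polynomial.induction_on' with
  | add p q hp hq =>
    simp only [ev₂, ev, Polynomial.map_add, eval_add] at hp hq ⊢
    exact hp.add hq
  | monomial n a =>
    simp only [ev₂, ev, map_monomial, eval_monomial, coe_evalRingHom]
    exact (a.continuous.comp continuous_snd).mul (continuous_fst.pow n)

/-- Along both the curve `u = -1 / ln x`, `x → 0⁺` and the iterated limit `x → 0⁺`, `u → 0⁺`,
a polynomial in `x` and `u` has the sign of its coefficient of lowest order, where `x` is
negligible against every power of `u`. -/
theorem exists_common_sign_aux (n : ℕ) : ∀ Q : ℝ[X][X], Q.natDegree ≤ n → ∃ σ : SignType,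
    (∀ᶠ t in 𝓝[>] (0 : ℝ), SignType.sign (ev₂ Q t (-1 / Real.log t)) = σ) ∧
    ∀ᶠ u in 𝓝[>] (0 : ℝ), ∀ᶠ x in 𝓝[>] (0 : ℝ), SignType.sign (ev₂ Q x u) = σ := by
  have hpos : ∀ᶠ t in 𝓝[>] (0 : ℝ), 0 < t := eventually_mem_nhdsWithin
  have hzero : ∀ Q : ℝ[X][X], Q.coeff 0 = 0 → (∃ σ : SignType,
      (∀ᶠ t in 𝓝[>] (0 : ℝ), SignType.sign (ev₂ Q.divX t (-1 / Real.log t)) = σ) ∧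
      ∀ᶠ u in 𝓝[>] (0 : ℝ), ∀ᶠ x in 𝓝[>] (0 : ℝ), SignType.sign (ev₂ Q.divX x u) = σ) →
      ∃ σ : SignType,
      (∀ᶠ t in 𝓝[>] (0 : ℝ), SignType.sign (ev₂ Q t (-1 / Real.log t)) = σ) ∧
      ∀ᶠ u in 𝓝[>] (0 : ℝ), ∀ᶠ x in 𝓝[>] (0 : ℝ), SignType.sign (ev₂ Q x u) = σ := by
    rintro Q h0 ⟨σ, h1, h2⟩
    refine ⟨σ, ?_, ?_⟩
    · filter_upwards [h1, hpos] with t ht htp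
      rw [ev₂_eq, h0, eval_zero, add_zero, sign_mul, sign_pos htp, one_mul, ht]
    · filter_upwards [h2] with u hu
      filter_upwards [hu, hpos] with t ht htp
      rw [ev₂_eq, h0, eval_zero, add_zero, sign_mul, sign_pos htp, one_mul, ht]
  have hne : ∀ Q : ℝ[X][X], Q.coeff 0 ≠ 0 → ∃ σ : SignType,
      (∀ᶠ t in 𝓝[>] (0 : ℝ), SignType.sign (ev₂ Q t (-1 / Real.log t)) = σ) ∧
      ∀ᶠ u in 𝓝[>] (0 : ℝ), ∀ᶠ x in 𝓝[>] (0 : ℝ), SignType.sign (ev₂ Q x u) = σ := by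
    intro Q h0
    obtain ⟨q, hq, hq0⟩ := Polynomial.exists_eq_pow_rootMultiplicity_mul_and_not_dvd _ h0 0
    set m := rootMultiplicity 0 (Q.coeff 0)
    rw [C_0, sub_zero] at hq hq0
    have ha : q.eval 0 ≠ 0 := by
      rw [← coeff_zero_eq_eval_zero]
      exact fun h => hq0 (X_dvd_iff.2 h)
    have hsign : ∀ᶠ r in 𝓝 (q.eval 0), SignType.sign r = SignType.sign (q.eval 0) := by
      rcases ha.lt_or_gt with h | h
      · filter_upwards [eventually_lt_nhds h] with r hr
        rw [sign_neg h, sign_neg hr]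
      · filter_upwards [eventually_gt_nhds h] with r hr
        rw [sign_pos h, sign_pos hr]
    have hev : ∀ u, (Q.coeff 0).eval u = u ^ m * q.eval u := by
      intro u
      conv_lhs => rw [hq]
      simp
    have hu0 : Tendsto (fun t : ℝ => -1 / Real.log t) (𝓝[>] 0) (𝓝[>] 0) := by
      rw [tendsto_nhdsWithin_iff]
      constructor
      · exact Real.tendsto_log_nhdsGT_zero.const_div_atBot (-1)
      · filter_upwards [Ioo_mem_nhdsGT (show (0 : ℝ) < 1 by norm_num)] with t ht
        exact div_pos_of_neg_of_neg (by norm_num) (Real.log_neg ht.1 ht.2)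
    refine ⟨SignType.sign (q.eval 0), ?_, ?_⟩
    · have hlim : Tendsto (fun t : ℝ => (t * (-Real.log t) ^ m) *
          ev₂ Q.divX t (-1 / Real.log t) + q.eval (-1 / Real.log t)) (𝓝[>] 0)
          (𝓝 (0 * ev₂ Q.divX 0 0 + q.eval 0)) := by
        have hu1 := hu0.mono_right nhdsWithin_le_nhds
        refine Tendsto.add (Tendsto.mul ?_ ?_) ?_
        · have h := (Real.tendsto_pow_mul_exp_neg_atTop_nhds_zero m).comp
            (tendsto_neg_atBot_atTop.comp Real.tendsto_log_nhdsGT_zero)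
          refine h.congr' ?_
          filter_upwards [hpos] with t ht
          simp only [Function.comp_apply, neg_neg, Real.exp_log ht]
          ring
        · exact ((continuous_ev₂ Q.divX).tendsto (0, 0)).comp
            ((tendsto_id.mono_left nhdsWithin_le_nhds).prodMk_nhds hu1)
        · exact (q.continuous.tendsto 0).comp hu1
      rw [zero_mul, zero_add] at hlim
      filter_upwards [hlim.eventually hsign, hu0.eventually hpos] with t ht hut
      rw [← ht]
      have hl : Real.log t ≠ 0 := by
        intro h
        simp [h] at hut
      have e : ev₂ Q t (-1 / Real.log t) = (-1 / Real.log t) ^ m *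
          ((t * (-Real.log t) ^ m) * ev₂ Q.divX t (-1 / Real.log t) +
            q.eval (-1 / Real.log t)) := by
        rw [ev₂_eq, hev]
        have : (-1 / Real.log t) ^ m * (-Real.log t) ^ m = 1 := by
          rw [← mul_pow, show -1 / Real.log t * -Real.log t = 1 by field_simp, one_pow]
        linear_combination (-t * ev₂ Q.divX t (-1 / Real.log t)) * this
      rw [e, sign_mul, sign_pos (pow_pos hut m), one_mul]
    · have h1 := ((q.continuous.tendsto 0).mono_left
        (nhdsWithin_le_nhds (s := Ioi 0))).eventually hsign
      filter_upwards [h1, hpos] with u hu hup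
      have hlim : Tendsto (fun x => x * ev₂ Q.divX x u / u ^ m + q.eval u) (𝓝[>] 0)
          (𝓝 (q.eval u)) := by
        have : Continuous fun x => x * ev₂ Q.divX x u / u ^ m + q.eval u := by
          have := (continuous_ev₂ Q.divX).comp (Continuous.prodMk_left u)
          exact ((continuous_id.mul this).div_const _).add continuous_const
        have := (this.tendsto 0).mono_left (nhdsWithin_le_nhds (s := Ioi 0))
        simpa using this
      have hs : ∀ᶠ r in 𝓝 (q.eval u), SignType.sign r = SignType.sign (q.eval u) := by
        have hqu : q.eval u ≠ 0 := by
          rw [← sign_ne_zero, hu, sign_ne_zero]; exact ha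
        rcases hqu.lt_or_gt with h | h
        · filter_upwards [eventually_lt_nhds h] with r hr
          rw [sign_neg h, sign_neg hr]
        · filter_upwards [eventually_gt_nhds h] with r hr
          rw [sign_pos h, sign_pos hr]
      filter_upwards [hlim.eventually hs] with x hx
      rw [← hu, ← hx]
      have hup' : 0 < u ^ m := pow_pos hup m
      have e : ev₂ Q x u = u ^ m * (x * ev₂ Q.divX x u / u ^ m + q.eval u) := by
        rw [ev₂_eq, hev]
        field_simp
      rw [e, sign_mul, sign_pos hup', one_mul]
  induction n with
  | zero =>
    intro Q hQ
    by_cases h0 : Q.coeff 0 = 0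
    · have : Q = 0 := by
        rw [eq_C_of_natDegree_le_zero hQ, h0, C_0]
      exact ⟨0, by simp [this, ev₂, ev], by simp [this, ev₂, ev]⟩
    · exact hne Q h0
  | succ n ih =>
    intro Q hQ
    by_cases h0 : Q.coeff 0 = 0
    · exact hzero Q h0 (ih _ (by rw [natDegree_divX_eq_natDegree_tsub_one]; omega))
    · exact hne Q h0

/-- The substitution `y = x u`, as a map from `ℝ[x, y]` to `ℝ[u][x]`. -/
noncomputable def blowUp : MvPolynomial (Fin 2) ℝ →+* ℝ[X][X] :=
  MvPolynomial.eval₂Hom (C.comp C) ![X, C X * X]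

theorem ev₂_blowUp (P : MvPolynomial (Fin 2) ℝ) (x u : ℝ) :
    ev₂ (blowUp P) x u = MvPolynomial.eval ![x, x * u] P := by
  have : ((evalRingHom x).comp (mapRingHom (evalRingHom u))).comp blowUp =
      MvPolynomial.eval ![x, x * u] := by
    apply MvPolynomial.ringHom_ext
    · intro r
      simp [blowUp]
    · intro i
      fin_cases i
      · simp [blowUp]
      · simp [blowUp]
        ring
  exact congrArg (fun f => f P) this

theorem exists_common_sign (P : MvPolynomial (Fin 2) ℝ) : ∃ σ : SignType,
    (∀ᶠ t in 𝓝[>] (0 : ℝ), SignType.sign (MvPolynomial.eval (OMinPaper.curveEx t) P) = σ) ∧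
    ∀ᶠ u in 𝓝[>] (0 : ℝ), ∀ᶠ x in 𝓝[>] (0 : ℝ),
      SignType.sign (MvPolynomial.eval ![x, x * u] P) = σ := by
  obtain ⟨σ, h1, h2⟩ := exists_common_sign_aux _ (blowUp P) le_rfl
  simp only [ev₂_blowUp] at h1 h2
  refine ⟨σ, ?_, h2⟩
  filter_upwards [h1] with t ht
  rw [OMinPaper.curveEx, ← ht, show t * (-1 / Real.log t) = -t / Real.log t by ring]

end Asymptotics

end SemialgQE

/-- With `F(x,y) = min(y/x,1)` on the open first quadrant (and `0`
elsewhere) and `γ̄(t) = (t, −t/ln t)`, there is no closed semialgebraic set `C ⊆ ℝ²`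
containing `γ̄([0,s))` for some `s ∈ (0,1)` on which `F` is continuous. -/
theorem statement_4 :
    ¬ ∃ (C : Set (Fin 2 → ℝ)) (s : ℝ), OMinPaper.Semialgebraic C ∧ IsClosed C ∧
        s ∈ Set.Ioo (0 : ℝ) 1 ∧ (∀ t ∈ Set.Ico (0 : ℝ) s, OMinPaper.curveEx t ∈ C) ∧
        ContinuousOn OMinPaper.Fex C := by
  rintro ⟨C, s, hsa, -, hs, hC, hcont⟩
  obtain ⟨H, hH, hmem⟩ := SemialgQE.exists_signs_of_semialgebraic hsa
  choose σ hσ₁ hσ₂ using SemialgQE.exists_common_sign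
  have h1 : ∀ᶠ t in 𝓝[>] (0 : ℝ), ∀ P ∈ H,
      SignType.sign (MvPolynomial.eval (OMinPaper.curveEx t) P) = σ P :=
    (eventually_all_finite hH).2 fun P _ => hσ₁ P
  have h2 : ∀ᶠ u in 𝓝[>] (0 : ℝ), ∀ᶠ x in 𝓝[>] (0 : ℝ), ∀ P ∈ H,
      SignType.sign (MvPolynomial.eval ![x, x * u] P) = σ P := by
    simp only [eventually_all_finite hH]
    exact fun P _ => hσ₂ P
  have h01 : Ioo (0 : ℝ) s ∈ 𝓝[>] (0 : ℝ) := Ioo_mem_nhdsGT hs.1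
  obtain ⟨t, ht, hts⟩ := (h1.and h01).exists
  obtain ⟨u, hu, hus⟩ := (h2.and h01).exists
  have htC : OMinPaper.curveEx t ∈ C := hC t ⟨hts.1.le, hts.2⟩
  -- the ray of slope `u` lies in `C` near the origin
  have hray : ∀ᶠ x in 𝓝[>] (0 : ℝ), ![x, x * u] ∈ C := by
    filter_upwards [hu] with x hx
    exact (hmem _ _ fun P hP => by rw [ht P hP, hx P hP]).1 htC
  have h0C : (![0, 0] : Fin 2 → ℝ) ∈ C := by
    simpa [OMinPaper.curveEx] using hC 0 ⟨le_rfl, hs.1⟩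
  have hlim : Tendsto (fun x : ℝ => (![x, x * u] : Fin 2 → ℝ)) (𝓝[>] 0) (𝓝[C] ![0, 0]) := by
    rw [tendsto_nhdsWithin_iff]
    refine ⟨?_, hray⟩
    have hc : Continuous fun x : ℝ => (![x, x * u] : Fin 2 → ℝ) := by fun_prop
    simpa using (hc.tendsto 0).mono_left nhdsWithin_le_nhds
  have hF := (hcont _ h0C).tendsto.comp hlim
  -- along the ray `F` is constantly `u`, whereas `F (0, 0) = 0`
  have hFu : Tendsto (OMinPaper.Fex ∘ fun x : ℝ => (![x, x * u] : Fin 2 → ℝ)) (𝓝[>] 0)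
      (𝓝 u) := by
    refine tendsto_const_nhds.congr' ?_
    filter_upwards [eventually_mem_nhdsWithin] with x hx
    have hx : 0 < x := hx
    have hu1 : u ≤ 1 := hus.2.le.trans hs.2.le
    simp [OMinPaper.Fex, hx, hus.1, mul_div_cancel_left₀ u hx.ne', hu1]
  have h0 := tendsto_nhds_unique hF hFu
  simp [OMinPaper.Fex] at h0
  exact hus.1.ne h0
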